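/- arXiv:0806.3235 — 4 statements merged into one kernel-verified Lean document; each statement's English description precedes it below -/
import Mathlib

section
/- Let d be a positive natural number and let a₁, a₂ be invertible d×d complex matrices. If the 2d×2d block matrix [[a₁*a₁, a₂*a₁], [a₁*a₂, a₂*a₂]] is positive semidefinite (the Størmer condition), then for every vector g ∈ ℂ^d one has ‖(a₁*)⁻¹ a₂* g‖ ≤ ‖a₂ a₁⁻¹ g‖; equivalently, the operator T = (a₂ a₁⁻¹)* is hyponormal, i.e., T T* ≤ T* T in the Loewner order. -/
open Matrix
open scoped ComplexOrder

/-!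
Put `S = a₂ a₁⁻¹`, so that `(a₁ᴴ)⁻¹ a₂ᴴ = Sᴴ`. Since `a₁ᴴ a₁` is positive definite, the Størmer
condition says that the Schur complement `a₂ᴴ a₂ - a₁ᴴ a₂ (a₁ᴴ a₁)⁻¹ a₂ᴴ a₁` is positive
semidefinite, and conjugating it by `a₁⁻¹` gives `S Sᴴ ≤ Sᴴ S`. In finite dimension the
self-commutator `Sᴴ S - S Sᴴ` has trace zero, so being positive semidefinite it vanishes: `S` is
normal. Hence `‖Sᴴ g‖ = ‖S g‖` for all `g`, and `T = Sᴴ` is normal as well, in particular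
hyponormal.
-/

/-- A matrix is hyponormal only if it is normal: the self-commutator has trace zero. -/
lemma conjTranspose_mul_self_eq_of_hyponormal {d : ℕ} {S : Matrix (Fin d) (Fin d) ℂ}
    (h : (Sᴴ * S - S * Sᴴ).PosSemidef) : Sᴴ * S = S * Sᴴ := by
  have htr : (Sᴴ * S - S * Sᴴ).trace = 0 := by
    rw [trace_sub, trace_mul_comm, sub_self]
  exact sub_eq_zero.mp (h.trace_eq_zero_iff.mp htr)

/-- The Schur complement of the Størmer block matrix, conjugated by `a₁⁻¹`. -/
lemma hyponormal_of_stormer {d : ℕ} {a₁ a₂ : Matrix (Fin d) (Fin d) ℂ} (h₁ : IsUnit a₁)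
    (hSt : (Matrix.fromBlocks (a₁ᴴ * a₁) (a₂ᴴ * a₁) (a₁ᴴ * a₂) (a₂ᴴ * a₂)).PosSemidef) :
    ((a₂ * a₁⁻¹)ᴴ * (a₂ * a₁⁻¹) - (a₂ * a₁⁻¹) * (a₂ * a₁⁻¹)ᴴ).PosSemidef := by
  have hdet : IsUnit a₁.det := (isUnit_iff_isUnit_det a₁).mp h₁
  have hdet' : IsUnit a₁ᴴ.det := by
    rw [det_conjTranspose]
    exact hdet.star
  have hA : (a₁ᴴ * a₁).PosDef :=
    PosDef.conjTranspose_mul_self a₁ (mulVec_injective_of_isUnit h₁)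
  have : Invertible (a₁ᴴ * a₁) := hA.isUnit.invertible
  have hC : a₁ᴴ * a₂ = (a₂ᴴ * a₁)ᴴ := by simp
  rw [hC, PosDef.fromBlocks₁₁ _ _ hA] at hSt
  have hS := hSt.conjTranspose_mul_mul_same a₁⁻¹
  have hconj : (a₁⁻¹)ᴴ * (a₂ᴴ * a₂ - (a₂ᴴ * a₁)ᴴ * (a₁ᴴ * a₁)⁻¹ * (a₂ᴴ * a₁)) * a₁⁻¹ =
      (a₂ * a₁⁻¹)ᴴ * (a₂ * a₁⁻¹) - (a₂ * a₁⁻¹) * (a₂ * a₁⁻¹)ᴴ := by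
    simp only [conjTranspose_mul, conjTranspose_conjTranspose, conjTranspose_nonsing_inv,
      Matrix.mul_inv_rev, Matrix.mul_sub, Matrix.sub_mul, Matrix.mul_assoc,
      nonsing_inv_mul_cancel_left _ _ hdet', mul_nonsing_inv _ hdet, Matrix.mul_one]
  rwa [hconj] at hS

/-- A normal matrix and its adjoint have the same norm at each vector. -/
lemma norm_toEuclideanLin_conjTranspose_eq {d : ℕ} {S : Matrix (Fin d) (Fin d) ℂ}
    (h : Sᴴ * S = S * Sᴴ) (g : EuclideanSpace ℂ (Fin d)) :
    ‖Matrix.toEuclideanLin Sᴴ g‖ = ‖Matrix.toEuclideanLin S g‖ := by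
  -- `‖A g‖² = ⟪g, Aᴴ A g⟫` for `A = Sᴴ` and `A = S`
  have key (A : Matrix (Fin d) (Fin d) ℂ) :
      inner ℂ (toEuclideanLin A g) (toEuclideanLin A g) =
        inner ℂ g (toEuclideanLin (Aᴴ * A) g) := by
    rw [← LinearMap.adjoint_inner_right, ← toEuclideanLin_conjTranspose_eq_adjoint]
    simp [toLpLin_apply]
  rw [@norm_eq_sqrt_re_inner ℂ, @norm_eq_sqrt_re_inner ℂ, key, key, conjTranspose_conjTranspose, h]

/-- If invertible matrices `a₁, a₂` satisfy the Størmer condition, then for every vector `g` one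
has `‖(a₁ᴴ)⁻¹ a₂ᴴ g‖ ≤ ‖a₂ a₁⁻¹ g‖` (Euclidean norms); equivalently, `T = (a₂ a₁⁻¹)ᴴ` is
hyponormal: `T Tᴴ ≤ Tᴴ T` in the Loewner order. -/
theorem stormer_condition_hyponormal (d : ℕ) (hd : 0 < d)
    (a₁ a₂ : Matrix (Fin d) (Fin d) ℂ) (h₁ : IsUnit a₁) (h₂ : IsUnit a₂)
    (hSt : (Matrix.fromBlocks (a₁ᴴ * a₁) (a₂ᴴ * a₁) (a₁ᴴ * a₂) (a₂ᴴ * a₂)).PosSemidef) :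
    (∀ g : EuclideanSpace ℂ (Fin d),
        ‖Matrix.toEuclideanLin ((a₁ᴴ)⁻¹ * a₂ᴴ) g‖ ≤ ‖Matrix.toEuclideanLin (a₂ * a₁⁻¹) g‖) ∧
      ((a₂ * a₁⁻¹)ᴴᴴ * (a₂ * a₁⁻¹)ᴴ - (a₂ * a₁⁻¹)ᴴ * (a₂ * a₁⁻¹)ᴴᴴ).PosSemidef := by
  have hN := conjTranspose_mul_self_eq_of_hyponormal (hyponormal_of_stormer h₁ hSt)
  refine ⟨fun g => ?_, ?_⟩
  · rw [← conjTranspose_nonsing_inv, ← conjTranspose_mul]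
    exact (norm_toEuclideanLin_conjTranspose_eq hN g).le
  · rw [conjTranspose_conjTranspose, hN, sub_self]
    exact PosSemidef.zero
end

section
/- Let d be a positive natural number and let a₁, a₂ be invertible d×d complex matrices. If the 2d×2d block matrix [[a₁*a₁, a₂*a₁], [a₁*a₂, a₂*a₂]] is positive semidefinite (the Størmer condition), then the matrix a₂ a₁⁻¹ is normal, i.e., (a₂ a₁⁻¹)* (a₂ a₁⁻¹) = (a₂ a₁⁻¹) (a₂ a₁⁻¹)*. -/
/-!
Put `T = a₂ a₁⁻¹`. Conjugating the block matrix by `diag(a₁⁻¹, a₁⁻¹)` turns it into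
`[[1, Tᴴ], [T, Tᴴ T]]`, whose Schur complement `Tᴴ T - T Tᴴ` is therefore positive semidefinite.
Its trace vanishes, and a positive semidefinite matrix of trace zero is zero.
-/

open Matrix
open scoped ComplexOrder

/-- If invertible matrices `a₁, a₂` satisfy the Størmer condition (positivity of
`[[a₁ᴴa₁, a₂ᴴa₁], [a₁ᴴa₂, a₂ᴴa₂]]`), then `a₂ a₁⁻¹` is a normal matrix. -/
theorem stormer_condition_normal (d : ℕ) (hd : 0 < d)
    (a₁ a₂ : Matrix (Fin d) (Fin d) ℂ) (h₁ : IsUnit a₁) (h₂ : IsUnit a₂)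
    (hSt : (Matrix.fromBlocks (a₁ᴴ * a₁) (a₂ᴴ * a₁) (a₁ᴴ * a₂) (a₂ᴴ * a₂)).PosSemidef) :
    (a₂ * a₁⁻¹)ᴴ * (a₂ * a₁⁻¹) = (a₂ * a₁⁻¹) * (a₂ * a₁⁻¹)ᴴ := by
  have hr : a₁ * a₁⁻¹ = 1 := Matrix.mul_nonsing_inv _ ((Matrix.isUnit_iff_isUnit_det _).1 h₁)
  have hl : (a₁⁻¹)ᴴ * a₁ᴴ = 1 := by
    rw [← conjTranspose_mul, hr, conjTranspose_one]
  have hblocks := hSt.conjTranspose_mul_mul_same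
    (Matrix.fromBlocks a₁⁻¹ 0 0 a₁⁻¹ : Matrix (Fin d ⊕ Fin d) (Fin d ⊕ Fin d) ℂ)
  set T := a₂ * a₁⁻¹ with hT
  have e11 : (a₁⁻¹)ᴴ * (a₁ᴴ * a₁) * a₁⁻¹ = 1 := by
    rw [← Matrix.mul_assoc, hl, Matrix.one_mul, hr]
  have e12 : (a₁⁻¹)ᴴ * (a₂ᴴ * a₁) * a₁⁻¹ = Tᴴ := by
    rw [Matrix.mul_assoc, Matrix.mul_assoc, hr, Matrix.mul_one, hT, conjTranspose_mul]
  have e21 : (a₁⁻¹)ᴴ * (a₁ᴴ * a₂) * a₁⁻¹ = T := by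
    rw [← Matrix.mul_assoc, hl, Matrix.one_mul]
  have e22 : (a₁⁻¹)ᴴ * (a₂ᴴ * a₂) * a₁⁻¹ = Tᴴ * T := by
    simp only [hT, conjTranspose_mul, Matrix.mul_assoc]
  simp only [fromBlocks_conjTranspose, fromBlocks_multiply, conjTranspose_zero, Matrix.zero_mul,
    Matrix.mul_zero, add_zero, zero_add, e11, e12, e21, e22] at hblocks
  have hschur : (Tᴴ * T - T * Tᴴ).PosSemidef := by
    letI : Invertible (1 : Matrix (Fin d) (Fin d) ℂ) := invertibleOne
    have h := (Matrix.PosDef.fromBlocks₁₁ Tᴴ (Tᴴ * T) Matrix.PosDef.one).1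
      (by rwa [conjTranspose_conjTranspose])
    simpa using h
  refine sub_eq_zero.1 (hschur.trace_eq_zero_iff.1 ?_)
  rw [trace_sub, trace_mul_comm, sub_self]
end

section
/- Let d be a positive natural number and let a₁, a₂ be invertible d×d complex matrices such that the 2d×2d block matrix [[a₁*a₁, a₂*a₁], [a₁*a₂, a₂*a₂]] is positive semidefinite (the Størmer condition). Then there exist an orthonormal basis e₁, …, e_d of ℂ^d and complex numbers λ₁, …, λ_d such that a₂ = Σᵢ λᵢ |eᵢ⟩⟨a₁* eᵢ|, i.e., a₂ equals the sum over i of λᵢ times the rank-one matrix sending a vector z to ⟨a₁* eᵢ, z⟩ eᵢ (equivalently, a₂ = Σᵢ λᵢ eᵢ (a₁* eᵢ)*, where (a₁* eᵢ)* denotes the conjugate-transpose row vector). -/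
/-!
Put `N = a₂ a₁⁻¹`. Conjugating the Størmer block matrix by `diag(a₁⁻¹, a₁⁻¹)` turns it into
`[[1, Nᴴ], [N, Nᴴ N]]`, whose Schur complement `Nᴴ N - N Nᴴ` is therefore positive semidefinite.
This matrix has trace zero, so it vanishes and `N` is normal. The spectral theorem
`N = ∑ λᵢ eᵢ eᵢᴴ` multiplied on the right by `a₁` gives the claimed form of `a₂`.

The spectral theorem for normal operators is obtained by diagonalizing simultaneously the real and
imaginary parts, which are commuting symmetric operators.
-/

open Matrix
open scoped ComplexOrder

/-- Spectral theorem: a normal operator on a finite-dimensional complex inner product space has an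
orthonormal basis of eigenvectors. -/
lemma exists_orthonormalBasis_of_isStarNormal {E : Type*} [NormedAddCommGroup E]
    [InnerProductSpace ℂ E] [FiniteDimensional ℂ E] {n : ℕ} (hn : Module.finrank ℂ E = n)
    (T : E →ₗ[ℂ] E) (hT : IsStarNormal T) :
    ∃ (e : OrthonormalBasis (Fin n) ℂ E) (l : Fin n → ℂ), ∀ i, T (e i) = l i • e i := by
  classical
  obtain ⟨A, B, hA, hB, hAB, hdec⟩ : ∃ A B : E →ₗ[ℂ] E, A.IsSymmetric ∧ B.IsSymmetric ∧
      Commute A B ∧ T = A + Complex.I • B :=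
    ⟨(realPart T : E →ₗ[ℂ] E), (imaginaryPart T : E →ₗ[ℂ] E),
      (LinearMap.isSymmetric_iff_isSelfAdjoint _).2 (realPart T).2,
      (LinearMap.isSymmetric_iff_isSelfAdjoint _).2 (imaginaryPart T).2,
      isStarNormal_iff_commute_realPart_imaginaryPart.1 hT,
      (realPart_add_I_smul_imaginaryPart T).symm⟩
  have hint := LinearMap.IsSymmetric.directSum_isInternal_of_commute hA hB hAB
  have hort := LinearMap.IsSymmetric.orthogonalFamily_eigenspace_inf_eigenspace hA hB
  -- Only finitely many joint eigenspaces are nonzero; restricting to them gives a finite index type.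
  have : Fintype {i : ℂ × ℂ //
      Module.End.eigenspace A i.2 ⊓ Module.End.eigenspace B i.1 ≠ ⊥} :=
    (WellFoundedGT.finite_ne_bot_of_iSupIndep hint.submodule_iSupIndep).fintype
  have hint' := DirectSum.isInternal_ne_bot_iff.mpr hint
  have hort' := hort.comp (Subtype.val_injective (p := fun i : ℂ × ℂ =>
    Module.End.eigenspace A i.2 ⊓ Module.End.eigenspace B i.1 ≠ ⊥))
  refine ⟨hint'.subordinateOrthonormalBasis hn hort',
    fun i => (hint'.subordinateOrthonormalBasisIndex hn i hort').1.2
      + Complex.I * (hint'.subordinateOrthonormalBasisIndex hn i hort').1.1, fun i => ?_⟩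
  obtain ⟨h1, h2⟩ := hint'.subordinateOrthonormalBasis_subordinate hn i hort'
  have h1 := Module.End.mem_eigenspace_iff.1 h1
  have h2 := Module.End.mem_eigenspace_iff.1 h2
  rw [hdec, LinearMap.add_apply, LinearMap.smul_apply, h1, h2, add_smul, mul_smul]

/-- Spectral decomposition of a normal matrix as a combination of rank-one projections. -/
lemma exists_eq_sum_vecMulVec_of_normal {d : ℕ} (N : Matrix (Fin d) (Fin d) ℂ)
    (hN : Nᴴ * N = N * Nᴴ) :
    ∃ (e : OrthonormalBasis (Fin d) ℂ (EuclideanSpace ℂ (Fin d))) (l : Fin d → ℂ),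
      N = ∑ i, l i • Matrix.vecMulVec (e i) (star (e i : Fin d → ℂ)) := by
  have hT : IsStarNormal (Matrix.toEuclideanLin N) := by
    refine ⟨?_⟩
    rw [LinearMap.star_eq_adjoint, ← Matrix.toEuclideanLin_conjTranspose_eq_adjoint]
    ext v : 1
    have h := congrArg (fun M => M *ᵥ (v : Fin d → ℂ)) hN
    simpa [Matrix.toLpLin_apply] using h
  obtain ⟨e, l, hel⟩ := exists_orthonormalBasis_of_isStarNormal (n := d) (by simp) _ hT
  refine ⟨e, l, ?_⟩
  apply Matrix.toEuclideanLin.injective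
  apply e.toBasis.ext
  intro j
  rw [OrthonormalBasis.coe_toBasis, hel, map_sum, LinearMap.sum_apply]
  have key : ∀ i, Matrix.toEuclideanLin (l i • Matrix.vecMulVec (e i) (star (e i : Fin d → ℂ))) (e j)
      = (l i * inner ℂ (e i) (e j)) • e i := by
    intro i
    ext k
    simp [Matrix.toLpLin_apply, Matrix.vecMulVec_mulVec,
      EuclideanSpace.inner_eq_star_dotProduct, dotProduct_comm]
    ring
  simp only [key, orthonormal_iff_ite.1 e.orthonormal]
  simp

/-- The Størmer condition forces `a₂ a₁⁻¹` to be normal. -/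
lemma normal_of_stormer {d : ℕ} (a₁ a₂ : Matrix (Fin d) (Fin d) ℂ) (h₁ : IsUnit a₁)
    (hSt : (Matrix.fromBlocks (a₁ᴴ * a₁) (a₂ᴴ * a₁) (a₁ᴴ * a₂) (a₂ᴴ * a₂)).PosSemidef) :
    (a₂ * a₁⁻¹)ᴴ * (a₂ * a₁⁻¹) = (a₂ * a₁⁻¹) * (a₂ * a₁⁻¹)ᴴ := by
  have hinv : a₁ * a₁⁻¹ = 1 := Matrix.mul_nonsing_inv _ ((Matrix.isUnit_iff_isUnit_det _).1 h₁)
  have hinv' : a₁⁻¹ᴴ * a₁ᴴ = 1 := by rw [← conjTranspose_mul, hinv, conjTranspose_one]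
  have h := hSt.conjTranspose_mul_mul_same (Matrix.fromBlocks a₁⁻¹ 0 0 a₁⁻¹)
  set N := a₂ * a₁⁻¹ with hN
  have hblock : (Matrix.fromBlocks a₁⁻¹ 0 0 a₁⁻¹)ᴴ *
      Matrix.fromBlocks (a₁ᴴ * a₁) (a₂ᴴ * a₁) (a₁ᴴ * a₂) (a₂ᴴ * a₂) *
      Matrix.fromBlocks a₁⁻¹ 0 0 a₁⁻¹ = Matrix.fromBlocks 1 Nᴴ Nᴴᴴ (Nᴴ * N) := by
    have e1 : a₁⁻¹ᴴ * (a₁ᴴ * a₁) * a₁⁻¹ = 1 := by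
      rw [← mul_assoc, hinv', one_mul, hinv]
    have e2 : a₁⁻¹ᴴ * (a₂ᴴ * a₁) * a₁⁻¹ = Nᴴ := by
      rw [mul_assoc, mul_assoc a₂ᴴ, hinv, mul_one, hN, conjTranspose_mul]
    have e3 : a₁⁻¹ᴴ * (a₁ᴴ * a₂) * a₁⁻¹ = N := by
      rw [← mul_assoc, hinv', one_mul]
    have e4 : a₁⁻¹ᴴ * (a₂ᴴ * a₂) * a₁⁻¹ = Nᴴ * N := by
      simp only [hN, conjTranspose_mul, mul_assoc]
    simp only [fromBlocks_conjTranspose, fromBlocks_multiply, conjTranspose_zero, zero_mul,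
      mul_zero, add_zero, zero_add, e1, e2, e3, e4, conjTranspose_conjTranspose]
  have : Invertible (1 : Matrix (Fin d) (Fin d) ℂ) := invertibleOne
  rw [hblock, Matrix.PosDef.fromBlocks₁₁ _ _ Matrix.PosDef.one] at h
  rw [inv_one, mul_one, conjTranspose_conjTranspose] at h
  have htr : (Nᴴ * N - N * Nᴴ).trace = 0 := by
    rw [Matrix.trace_sub, Matrix.trace_mul_comm, sub_self]
  exact sub_eq_zero.1 (h.trace_eq_zero_iff.1 htr)

/-- If invertible matrices `a₁, a₂` satisfy the Størmer condition, then there are an orthonormal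
basis `e₁, …, e_d` of `ℂ^d` and complex numbers `λ₁, …, λ_d` such that
`a₂ = ∑ i, λᵢ |eᵢ⟩⟨a₁ᴴ eᵢ|`, where `|f⟩⟨g|` is the outer product `f gᴴ`. -/
theorem stormer_condition_a₂_form (d : ℕ) (hd : 0 < d)
    (a₁ a₂ : Matrix (Fin d) (Fin d) ℂ) (h₁ : IsUnit a₁) (h₂ : IsUnit a₂)
    (hSt : (Matrix.fromBlocks (a₁ᴴ * a₁) (a₂ᴴ * a₁) (a₁ᴴ * a₂) (a₂ᴴ * a₂)).PosSemidef) :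
    ∃ (e : OrthonormalBasis (Fin d) ℂ (EuclideanSpace ℂ (Fin d))) (l : Fin d → ℂ),
      a₂ = ∑ i, l i • Matrix.vecMulVec (e i) (star (a₁ᴴ *ᵥ (e i))) := by
  obtain ⟨e, l, h⟩ := exists_eq_sum_vecMulVec_of_normal _ (normal_of_stormer a₁ a₂ h₁ hSt)
  refine ⟨e, l, ?_⟩
  have hinv : a₁⁻¹ * a₁ = 1 := Matrix.nonsing_inv_mul _ ((Matrix.isUnit_iff_isUnit_det _).1 h₁)
  have h' := congrArg (· * a₁) h
  simp only [mul_assoc, hinv, mul_one, Finset.sum_mul, smul_mul_assoc, Matrix.vecMulVec_mul] at h'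
  simpa only [star_mulVec, conjTranspose_conjTranspose] using h'
end

section
/- Let d be a positive natural number and let a₁, a₂ be invertible d×d complex matrices such that the 2d×2d block matrix [[a₁*a₁, a₂*a₁], [a₁*a₂, a₂*a₂]] is positive semidefinite (the Størmer condition). Then there exist an orthonormal basis f₁, …, f_d of ℂ^d and complex numbers μ₁, …, μ_d such that a₁ = Σᵢ μᵢ |fᵢ⟩⟨a₂* fᵢ|, i.e., a₁ = Σᵢ μᵢ fᵢ (a₂* fᵢ)*. -/
/-!
Put `T = a₁ a₂⁻¹`. Taking the Schur complement of the block `a₂ᴴ a₂` in the Størmer condition and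
conjugating by `a₂⁻¹` shows that `Tᴴ T - T Tᴴ` is positive semidefinite. Its trace vanishes, so it
is zero and `T` is normal (`isStarNormal_mul_inv_of_fromBlocks_posSemidef`). By the spectral theorem
for normal matrices (`exists_orthonormalBasis_of_isStarNormal`),
`T = ∑ i, μᵢ |fᵢ⟩⟨fᵢ|` for an orthonormal basis `f`, and multiplying by `a₂` on the right gives the
claim.
-/

open Matrix
open scoped ComplexOrder

/-- A normal matrix has an orthonormal basis of eigenvectors: its real and imaginary parts are
commuting Hermitian matrices, so the space is the orthogonal sum of their joint eigenspaces. -/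
lemma exists_orthonormalBasis_of_isStarNormal_s8 {d : ℕ} (T : Matrix (Fin d) (Fin d) ℂ)
    (hT : IsStarNormal T) :
    ∃ (f : OrthonormalBasis (Fin d) ℂ (EuclideanSpace ℂ (Fin d))) (μ : Fin d → ℂ),
      ∀ i, T *ᵥ (f i) = μ i • (f i : Fin d → ℂ) := by
  classical
  obtain ⟨R, I, hR, hI, hc, hdec⟩ : ∃ R I : Matrix (Fin d) (Fin d) ℂ, R.IsHermitian ∧
      I.IsHermitian ∧ Commute R I ∧ T = R + Complex.I • I :=
    ⟨realPart T, imaginaryPart T, (realPart T).2, (imaginaryPart T).2,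
      isStarNormal_iff_commute_realPart_imaginaryPart.1 hT,
      (realPart_add_I_smul_imaginaryPart T).symm⟩
  have hRs := Matrix.isSymmetric_toEuclideanLin_iff.2 hR
  have hIs := Matrix.isSymmetric_toEuclideanLin_iff.2 hI
  have hcs : Commute (Matrix.toEuclideanLin R) (Matrix.toEuclideanLin I) := by
    apply LinearMap.ext
    intro x
    have h := congrArg (fun M => WithLp.toLp 2 (M *ᵥ x.ofLp)) hc.eq
    simpa [Matrix.toLpLin_apply] using h
  have hV := hRs.directSum_isInternal_of_commute hIs hcs
  have hO := LinearMap.IsSymmetric.orthogonalFamily_eigenspace_inf_eigenspace hRs hIs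
  -- Only finitely many joint eigenspaces are nonzero, and the zero ones can be discarded.
  have hfin := WellFoundedGT.finite_ne_bot_of_iSupIndep hO.independent
  let _ : Fintype {i : ℂ × ℂ // Module.End.eigenspace (Matrix.toEuclideanLin R) i.2 ⊓
      Module.End.eigenspace (Matrix.toEuclideanLin I) i.1 ≠ ⊥} := hfin.fintype
  have hV' := DirectSum.isInternal_ne_bot_iff.2 hV
  have hO' := hO.comp (Subtype.val_injective (p := fun i : ℂ × ℂ =>
    Module.End.eigenspace (Matrix.toEuclideanLin R) i.2 ⊓
      Module.End.eigenspace (Matrix.toEuclideanLin I) i.1 ≠ ⊥))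
  have hn : Module.finrank ℂ (EuclideanSpace ℂ (Fin d)) = d := by simp
  refine ⟨hV'.subordinateOrthonormalBasis hn hO',
    fun i => (hV'.subordinateOrthonormalBasisIndex hn i hO').1.2 +
      Complex.I * (hV'.subordinateOrthonormalBasisIndex hn i hO').1.1, fun i => ?_⟩
  have h := hV'.subordinateOrthonormalBasis_subordinate hn i hO'
  obtain ⟨h1, h2⟩ := Submodule.mem_inf.1 h
  rw [Module.End.mem_eigenspace_iff] at h1 h2
  have h1' := congrArg WithLp.ofLp h1
  have h2' := congrArg WithLp.ofLp h2
  simp only [Matrix.toLpLin_apply, WithLp.ofLp_smul] at h1' h2'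
  rw [hdec, Matrix.add_mulVec, Matrix.smul_mulVec, h1', h2', add_smul, mul_smul]

/-- Resolution of the identity. -/
lemma sum_vecMulVec_orthonormalBasis {d : ℕ}
    (f : OrthonormalBasis (Fin d) ℂ (EuclideanSpace ℂ (Fin d))) :
    ∑ i, Matrix.vecMulVec (f i : Fin d → ℂ) (star (f i : Fin d → ℂ)) = 1 := by
  apply Matrix.ext_of_mulVec_single
  intro j
  have h := congrArg WithLp.ofLp (f.sum_repr' (WithLp.toLp 2 (Pi.single j 1)))
  simp only [WithLp.ofLp_sum, WithLp.ofLp_smul] at h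
  rw [Matrix.one_mulVec, Matrix.sum_mulVec, ← h]
  refine Finset.sum_congr rfl fun i _ => ?_
  rw [Matrix.vecMulVec_mulVec, EuclideanSpace.inner_eq_star_dotProduct, op_smul_eq_smul, h,
    dotProduct_comm]

lemma isStarNormal_mul_inv_of_fromBlocks_posSemidef {d : ℕ}
    (a₁ a₂ : Matrix (Fin d) (Fin d) ℂ) (h₂ : IsUnit a₂)
    (hSt : (Matrix.fromBlocks (a₁ᴴ * a₁) (a₂ᴴ * a₁) (a₁ᴴ * a₂) (a₂ᴴ * a₂)).PosSemidef) :
    IsStarNormal (a₁ * a₂⁻¹) := by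
  have hdet := (Matrix.isUnit_iff_isUnit_det a₂).1 h₂
  have hdet' : IsUnit a₂ᴴ.det := by rw [Matrix.det_conjTranspose]; exact hdet.star
  have hD : (a₂ᴴ * a₂).PosDef :=
    Matrix.PosDef.conjTranspose_mul_self _ (Matrix.mulVec_injective_iff_isUnit.2 h₂)
  let _ := hD.isUnit.invertible
  have hB : a₁ᴴ * a₂ = (a₂ᴴ * a₁)ᴴ := by simp
  rw [hB, Matrix.PosDef.fromBlocks₂₂ _ _ hD] at hSt
  have h := hSt.conjTranspose_mul_mul_same a₂⁻¹
  have e : a₂⁻¹ᴴ * (a₁ᴴ * a₁ - a₂ᴴ * a₁ * (a₂ᴴ * a₂)⁻¹ * (a₂ᴴ * a₁)ᴴ) * a₂⁻¹ =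
      (a₁ * a₂⁻¹)ᴴ * (a₁ * a₂⁻¹) - (a₁ * a₂⁻¹) * (a₁ * a₂⁻¹)ᴴ := by
    simp only [Matrix.mul_inv_rev, Matrix.conjTranspose_mul, Matrix.conjTranspose_conjTranspose,
      Matrix.conjTranspose_nonsing_inv, Matrix.mul_sub, Matrix.sub_mul, Matrix.mul_assoc,
      Matrix.mul_nonsing_inv _ hdet, Matrix.nonsing_inv_mul_cancel_left _ _ hdet', Matrix.mul_one]
  rw [e] at h
  have h0 := h.trace_eq_zero_iff.1 (by rw [Matrix.trace_sub, Matrix.trace_mul_comm, sub_self])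
  exact ⟨sub_eq_zero.1 h0⟩



/-- If invertible matrices `a₁, a₂` satisfy the Størmer condition, then (by the Ando–Choi
inequality, interchanging the roles of `a₁` and `a₂`) there are an orthonormal basis
`f₁, …, f_d` of `ℂ^d` and complex numbers `μ₁, …, μ_d` such that
`a₁ = ∑ i, μᵢ |fᵢ⟩⟨a₂ᴴ fᵢ|`, where `|f⟩⟨g|` is the outer product `f gᴴ`. -/
theorem stormer_condition_a₁_form (d : ℕ) (hd : 0 < d)
    (a₁ a₂ : Matrix (Fin d) (Fin d) ℂ) (h₁ : IsUnit a₁) (h₂ : IsUnit a₂)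
    (hSt : (Matrix.fromBlocks (a₁ᴴ * a₁) (a₂ᴴ * a₁) (a₁ᴴ * a₂) (a₂ᴴ * a₂)).PosSemidef) :
    ∃ (f : OrthonormalBasis (Fin d) ℂ (EuclideanSpace ℂ (Fin d))) (μ : Fin d → ℂ),
      a₁ = ∑ i, μ i • Matrix.vecMulVec (f i) (star (a₂ᴴ *ᵥ (f i))) := by
  obtain ⟨f, μ, hf⟩ := exists_orthonormalBasis_of_isStarNormal_s8 _
    (isStarNormal_mul_inv_of_fromBlocks_posSemidef a₁ a₂ h₂ hSt)
  refine ⟨f, μ, ?_⟩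
  have hdet := (Matrix.isUnit_iff_isUnit_det a₂).1 h₂
  calc a₁ = (a₁ * a₂⁻¹) * 1 * a₂ := by
        rw [Matrix.mul_one, Matrix.nonsing_inv_mul_cancel_right _ _ hdet]
    _ = _ := by
        rw [← sum_vecMulVec_orthonormalBasis f, Finset.mul_sum, Finset.sum_mul]
        refine Finset.sum_congr rfl fun i _ => ?_
        rw [Matrix.mul_vecMulVec, hf, Matrix.vecMulVec_mul, Matrix.smul_vecMulVec,
          Matrix.star_mulVec, Matrix.conjTranspose_conjTranspose]
end
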